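/- arXiv:0911.0445 — 2 statements merged into one kernel-verified Lean document; each statement's English description precedes it below -/
import Mathlib

section
/- Let n ≥ 1 and let G be a subgroup of S_n. Then the semigroup ⟨a^g | g ∈ G⟩ generated by the conjugates of a by elements of G is regular for every singular transformation a ∈ T_n∖S_n if and only if G has the universal transversal property. -/
/-!
Write `S = ⟨a^g | g ∈ G⟩`.

If every such `S` is regular, let `I` and `P` have the same size and choose `a` with image `I` and
kernel `P`. When `a` is bijective, `I` is everything and `P` is discrete. Otherwise `a = a v a` with
`v ∈ S`; every element of `S` starts with some conjugate of `a`, so `v = g a w` with `g ∈ G`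
(`exists_factor`). Hence `g a` is injective on `I = im a`, and by counting `I g` is a transversal
of `P`.

Conversely, given `u ∈ S`, the universal transversal property yields `g ∈ G` such that `(im u) g` is
a transversal of `ker u`; thus `g u` permutes the finite set `im u`, and some power `(g u)^m`, with
`m ≥ 2` a multiple of the order of `g`, fixes `im u` pointwise. So `u = u · (g u)^(m-1) g · u`, and
since `g^m = 1` the middle factor is the product `u^(g⁻¹) u^(g⁻²) ⋯ u^(g^(-(m-1)))` of conjugates
of `u`, which lies in `S` because `S` is closed under conjugation by `G`.
-/


open Finset

/-- Transformations of a set `α`, composed left-to-right (acting on the right):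
`x (a * b) = (x a) b`. -/
structure Transf (α : Type*) where
  toFun : α → α

namespace Transf

variable {α : Type*}

instance : Semigroup (Transf α) where
  mul a b := ⟨fun x => b.toFun (a.toFun x)⟩
  mul_assoc _ _ _ := rfl

/-- The transformation induced by a permutation. -/
def ofPerm (g : Equiv.Perm α) : Transf α := ⟨g⟩

/-- The rank of a transformation: the cardinality of its image. -/
noncomputable def rank (a : Transf α) : ℕ := Set.ncard (Set.range a.toFun)

end Transf

/-- The subsemigroup `⟨G, a⟩` generated by `G ∪ {a}`. -/
def genGA {α : Type*} (G : Subgroup (Equiv.Perm α)) (a : Transf α) :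
    Subsemigroup (Transf α) :=
  Subsemigroup.closure (insert a (Transf.ofPerm '' (G : Set (Equiv.Perm α))))

/-- The set `⟨G, a⟩ ∖ G`. -/
def genGAminusG {α : Type*} (G : Subgroup (Equiv.Perm α)) (a : Transf α) :
    Set (Transf α) :=
  (genGA G a : Set (Transf α)) \ (Transf.ofPerm '' (G : Set (Equiv.Perm α)))

/-- The set of conjugates `a^g = g⁻¹ a g` with `g ∈ G`. -/
def conjSet {α : Type*} (G : Subgroup (Equiv.Perm α)) (a : Transf α) : Set (Transf α) :=
  (fun g : Equiv.Perm α => Transf.ofPerm g⁻¹ * a * Transf.ofPerm g) '' (G : Set (Equiv.Perm α))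

/-- The subsemigroup `⟨a^g | g ∈ G⟩`. -/
def genConj {α : Type*} (G : Subgroup (Equiv.Perm α)) (a : Transf α) :
    Subsemigroup (Transf α) :=
  Subsemigroup.closure (conjSet G a)

/-- A subset of the transformation semigroup is regular if every element `u` of it
admits `v` in the set with `u = u v u`. -/
def IsRegularSet {α : Type*} (S : Set (Transf α)) : Prop :=
  ∀ u ∈ S, ∃ v ∈ S, u * v * u = u

/-- A subset of the transformation semigroup is idempotent generated if it coincides with
the subsemigroup generated by its idempotent elements. -/
def IsIdemGen {α : Type*} (S : Set (Transf α)) : Prop :=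
  S = ↑(Subsemigroup.closure {u | u ∈ S ∧ u * u = u})

/-- `T` is a transversal for the partition `P`: it meets each class in exactly one point. -/
def IsTransversal {α : Type*} [DecidableEq α] [Fintype α] (T : Finset α)
    (P : Finpartition (Finset.univ : Finset α)) : Prop :=
  ∀ p ∈ P.parts, (T ∩ p).card = 1

/-- The universal transversal property: for every subset `I` and every partition `P`
with exactly `|I|` classes, some `G`-translate of `I` is a transversal for `P`. -/
def HasUTP {α : Type*} [DecidableEq α] [Fintype α] (G : Subgroup (Equiv.Perm α)) : Prop :=
  ∀ (I : Finset α) (P : Finpartition (Finset.univ : Finset α)),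
    P.parts.card = I.card → ∃ g ∈ G, IsTransversal (I.image ⇑g) P

theorem Transf.ext_fun {α : Type*} {a b : Transf α} (h : ∀ x, a.toFun x = b.toFun x) : a = b := by
  cases a; cases b; congr; exact funext h

/-- Every element of `⟨a^g | g ∈ G⟩` has the form `g a w`, since it starts with a conjugate of `a`. -/
theorem exists_factor {α : Type*} (G : Subgroup (Equiv.Perm α)) (a : Transf α) (v : Transf α)
    (hv : v ∈ genConj G a) : ∃ g ∈ G, ∃ w : α → α, ∀ x, v.toFun x = w (a.toFun (g x)) := by
  refine Subsemigroup.closure_induction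
    (p := fun v _ => ∃ g ∈ G, ∃ w : α → α, ∀ x, v.toFun x = w (a.toFun (g x))) ?_ ?_ hv
  · rintro _ ⟨g, hg, rfl⟩
    exact ⟨g⁻¹, G.inv_mem hg, g, fun x => rfl⟩
  · rintro x y _ _ ⟨g, hg, w, hw⟩ _
    exact ⟨g, hg, y.toFun ∘ w, fun z => congrArg y.toFun (hw z)⟩

theorem conj_mem_genConj {α : Type*} (G : Subgroup (Equiv.Perm α)) (a : Transf α)
    {g : Equiv.Perm α} (hg : g ∈ G) (v : Transf α) (hv : v ∈ genConj G a) :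
    Transf.ofPerm g⁻¹ * v * Transf.ofPerm g ∈ genConj G a := by
  refine Subsemigroup.closure_induction
    (p := fun v _ => Transf.ofPerm g⁻¹ * v * Transf.ofPerm g ∈ genConj G a) ?_ ?_ hv
  · rintro _ ⟨h, hh, rfl⟩
    refine Subsemigroup.subset_closure ⟨g * h, G.mul_mem hg hh, Transf.ext_fun fun x => ?_⟩
    change (g * h) (a.toFun ((g * h)⁻¹ x)) = g (h (a.toFun (h⁻¹ (g⁻¹ x))))
    simp [mul_inv_rev]
  · intro x y _ _ hx hy
    have := (genConj G a).mul_mem hx hy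
    convert this using 1
    refine Transf.ext_fun fun z => ?_
    change g (y.toFun (x.toFun (g⁻¹ z))) = g (y.toFun (g⁻¹ (g (x.toFun (g⁻¹ z)))))
    simp

/-- `(g u)^(k+1) g^(-(k+1))` lies in the semigroup, being the product
`u^(g⁻¹) u^(g⁻²) ⋯ u^(g^(-(k+1)))` of conjugates of `u`. -/
theorem exists_prod_conj {α : Type*} (G : Subgroup (Equiv.Perm α)) (a : Transf α)
    {g : Equiv.Perm α} (hg : g ∈ G) (u : Transf α) (hu : u ∈ genConj G a) (k : ℕ) :
    ∃ v ∈ genConj G a, ∀ x,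
      v.toFun x = (g ^ (k + 1))⁻¹ ((fun y => u.toFun (g y))^[k + 1] x) := by
  induction k with
  | zero =>
    refine ⟨_, conj_mem_genConj G a (G.inv_mem hg) u hu, fun x => ?_⟩
    change g⁻¹ (u.toFun (g⁻¹⁻¹ x)) = _
    simp
  | succ k ih =>
    obtain ⟨v, hv, h⟩ := ih
    refine ⟨_, (genConj G a).mul_mem hv
      (conj_mem_genConj G a (G.inv_mem (G.pow_mem hg (k + 2))) u hu), fun x => ?_⟩
    change (g ^ (k + 2))⁻¹ (u.toFun ((g ^ (k + 2))⁻¹⁻¹ (v.toFun x))) = _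
    rw [h, Function.iterate_succ_apply' _ (k + 1), inv_inv, pow_succ' g (k + 1),
      Equiv.Perm.mul_apply, ← Equiv.Perm.mul_apply (g ^ (k + 1)), mul_inv_cancel, Equiv.Perm.one_apply]

/-- If `g u` is injective on `im u`, then it permutes this finite set, so `(g u)^m` fixes `im u`
pointwise for some `m = k + 2` that is also a multiple of the order of `g`. -/
theorem exists_iterate_fix {α : Type*} [DecidableEq α] [Fintype α] (g : Equiv.Perm α)
    (u : α → α) (hinj : ∀ x y, u (g (u x)) = u (g (u y)) → u x = u y) :
    ∃ k : ℕ, g ^ (k + 2) = 1 ∧ ∀ x, (fun y => u (g y))^[k + 2] (u x) = u x := by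
  let h : Set.range u → Set.range u := fun y => ⟨u (g y), Set.mem_range_self _⟩
  have hh : Function.Injective h := by
    rintro ⟨_, x, rfl⟩ ⟨_, y, rfl⟩ hxy
    exact Subtype.ext (hinj x y (congrArg Subtype.val hxy))
  let σ : Equiv.Perm (Set.range u) := Equiv.ofBijective h (Finite.injective_iff_bijective.1 hh)
  have hpos : 0 < orderOf g * orderOf σ := Nat.mul_pos (orderOf_pos g) (orderOf_pos σ)
  -- The factor `2` guarantees an exponent of at least `2`.
  obtain ⟨k, hk⟩ : ∃ k, k + 2 = orderOf g * orderOf σ * 2 := ⟨_, Nat.sub_add_cancel (by omega)⟩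
  refine ⟨k, ?_, fun x => ?_⟩
  · rw [hk, mul_assoc, pow_mul, pow_orderOf_eq_one, one_pow]
  · have hσ : σ ^ (k + 2) = 1 := by
      rw [hk, mul_comm (orderOf g), mul_assoc, pow_mul, pow_orderOf_eq_one, one_pow]
    have hit : ∀ (j : ℕ) (y : Set.range u),
        (((σ ^ j) y : Set.range u) : α) = (fun y => u (g y))^[j] y := by
      intro j
      induction j with
      | zero => intro y; rfl
      | succ j ih =>
        intro y
        rw [Function.iterate_succ_apply', ← ih, pow_succ']
        rfl
    rw [← hit (k + 2) ⟨u x, Set.mem_range_self x⟩, hσ]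
    rfl

theorem hasUTP_of_regular {α : Type*} [DecidableEq α] [Fintype α] (G : Subgroup (Equiv.Perm α))
    (H : ∀ a : Transf α, ¬ Function.Bijective a.toFun →
      IsRegularSet (genConj G a : Set (Transf α))) : HasUTP G := by
  intro I P hc
  let e : P.parts ≃ I := Finset.equivOfCardEq hc
  -- `f` has kernel `P` and image `I`.
  let f : α → α := fun x => e ⟨P.part x, P.part_mem.2 (Finset.mem_univ x)⟩
  have hfI : ∀ x, f x ∈ I := fun x => (e _).2
  have hf : ∀ p (hp : p ∈ P.parts) x, x ∈ p ↔ f x = e ⟨p, hp⟩ := by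
    intro p hp x
    rw [← Subtype.ext_iff, e.apply_eq_iff_eq, Subtype.mk.injEq,
      P.part_eq_iff_mem hp]
  have hIf : ∀ i ∈ I, ∃ x, f x = i := by
    intro i hi
    obtain ⟨x, hx⟩ := P.nonempty_of_mem_parts (e.symm ⟨i, hi⟩).2
    exact ⟨x, by rw [(hf _ (e.symm ⟨i, hi⟩).2 x).1 hx]; simp⟩
  have key : ∀ g : Equiv.Perm α, (∀ i ∈ I, ∀ j ∈ I, f (g i) = f (g j) → i = j) →
      IsTransversal (I.image ⇑g) P := by
    intro g hg p hp
    have hsurj := Finset.surj_on_of_inj_on_of_card_le (s := I) (t := I)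
      (fun i _ => f (g i)) (fun i _ => hfI _) (fun i j hi hj h => hg i hi j hj h) le_rfl
    obtain ⟨i, hi, hie⟩ := hsurj _ (e ⟨p, hp⟩).2
    rw [Finset.card_eq_one]
    refine ⟨g i, Finset.ext fun y => ?_⟩
    simp only [Finset.mem_inter, Finset.mem_image, Finset.mem_singleton]
    constructor
    · rintro ⟨⟨j, hj, rfl⟩, hy⟩
      rw [hg j hj i hi (((hf p hp _).1 hy).trans hie)]
    · rintro rfl
      exact ⟨⟨i, hi, rfl⟩, (hf p hp _).2 hie.symm⟩
  by_cases hb : Function.Bijective f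
  · exact ⟨1, G.one_mem, key 1 fun i _ j _ h => hb.1 h⟩
  · obtain ⟨v, hv, hva⟩ := H ⟨f⟩ hb ⟨f⟩
      (Subsemigroup.subset_closure ⟨1, G.one_mem, rfl⟩)
    obtain ⟨g, hg, w, hw⟩ := exists_factor G _ v hv
    refine ⟨g, hg, key g fun i hi j hj h => ?_⟩
    obtain ⟨x, rfl⟩ := hIf i hi
    obtain ⟨y, rfl⟩ := hIf j hj
    have hfix : ∀ z, f (w (f (g (f z)))) = f z := fun z => by
      have h1 : f (v.toFun (f z)) = f z := congrFun (congrArg Transf.toFun hva) z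
      rwa [hw] at h1
    rw [← hfix x, h, hfix y]

theorem regular_of_hasUTP {α : Type*} [DecidableEq α] [Fintype α] (G : Subgroup (Equiv.Perm α))
    (H : HasUTP G) (a : Transf α) : IsRegularSet (genConj G a : Set (Transf α)) := by
  intro u hu
  -- `c i` is the fibre of `u` over `i`; the fibres over `im u` are the classes of `ker u`.
  let c : α → Finset α := fun i => Finset.univ.filter fun y => u.toFun y = i
  let P : Finpartition (Finset.univ : Finset α) := Finpartition.ofSetoid (Setoid.ker u.toFun)
  have hP : P.parts = (Finset.univ.image u.toFun).image c := by
    ext p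
    simp only [P, c, Finpartition.ofSetoid, Finpartition.ofSetSetoid, Finset.mem_image,
      Finset.mem_univ, true_and, exists_exists_eq_and, Setoid.ker_def]
    simp only [eq_comm]
  have hcard : P.parts.card = (Finset.univ.image u.toFun).card := by
    rw [hP]
    refine Finset.card_image_of_injOn ?_
    intro i hi j hj hij
    obtain ⟨x, -, rfl⟩ := Finset.mem_image.1 (Finset.mem_coe.1 hi)
    have hx : x ∈ c j := hij ▸ (by simp [c])
    simpa [c] using hx
  obtain ⟨g, hg, hT⟩ := H _ P hcard
  have hinj : ∀ x y, u.toFun (g (u.toFun x)) = u.toFun (g (u.toFun y)) →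
      u.toFun x = u.toFun y := by
    intro x y hxy
    have h1 := hT (c (u.toFun (g (u.toFun x)))) (by
      rw [hP]; exact Finset.mem_image_of_mem _ (Finset.mem_image_of_mem _ (Finset.mem_univ _)))
    refine g.injective (Finset.card_le_one.1 h1.le _ ?_ _ ?_)
    · simp [c]
    · simp [c, hxy]
  obtain ⟨k, hk, hfix⟩ := exists_iterate_fix g u.toFun hinj
  obtain ⟨v, hv, hvx⟩ := exists_prod_conj G a hg u hu k
  refine ⟨v, hv, Transf.ext_fun fun x => ?_⟩
  change u.toFun (v.toFun (u.toFun x)) = u.toFun x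
  have hginv : (g ^ (k + 1))⁻¹ = g := by
    rw [inv_eq_iff_mul_eq_one, ← pow_succ, hk]
  rw [hvx, hginv]
  have := hfix x
  rwa [Function.iterate_succ_apply'] at this

theorem stmt2 (n : ℕ) (hn : 1 ≤ n) (G : Subgroup (Equiv.Perm (Fin n))) :
    (∀ a : Transf (Fin n), ¬ Function.Bijective a.toFun →
      IsRegularSet (genConj G a : Set (Transf (Fin n)))) ↔ HasUTP G :=
  ⟨hasUTP_of_regular G, fun H a _ => regular_of_hasUTP G H a⟩
end

section
/- Let n ≥ 1 and let G be a subgroup of S_n. Then the semigroup ⟨G,a⟩∖G is idempotent generated for every singular transformation a ∈ T_n∖S_n if and only if the semigroup ⟨a^g | g ∈ G⟩ is idempotent generated for every singular transformation a ∈ T_n∖S_n. -/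
/-!
Every element of `⟨G, a⟩ ∖ G` has the form `s h` with `s ∈ ⟨a^g | g ∈ G⟩` and `h ∈ G`, because
group elements can be pushed to the right past `a` at the cost of conjugating it
(`mem_genGA_cases`).

If every `⟨G, a⟩ ∖ G` is idempotent generated, then `a^g` is a product of idempotents of
`⟨G, a⟩ ∖ G`. Such an idempotent `e = s h` satisfies `e = e ^ m`, which is an element of
`⟨a^g | g ∈ G⟩` times `h ^ m`; taking `m` to be the order of `h` shows that `e` itself lies in
`⟨a^g | g ∈ G⟩` (`idem_mem_genConj`).

Conversely, if every `⟨u^g | g ∈ G⟩` with `u` singular is idempotent generated, then each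
`u ∈ ⟨G, a⟩ ∖ G` is a product of idempotents of `⟨u^g | g ∈ G⟩`, and that semigroup is contained
in `⟨G, a⟩ ∖ G`.
-/

open Finset

namespace Transf

variable {α : Type*}

theorem ofPerm_mul (g h : Equiv.Perm α) : ofPerm g * ofPerm h = ofPerm (h * g) := rfl

theorem mul_ofPerm_one (a : Transf α) : a * ofPerm 1 = a := rfl

theorem bijective_ofPerm (g : Equiv.Perm α) : Function.Bijective (ofPerm g).toFun := g.bijective

theorem bijective_left_of_mul [Finite α] {x y : Transf α}
    (h : Function.Bijective (x * y).toFun) : Function.Bijective x.toFun :=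
  Finite.injective_iff_bijective.mp
    (Function.Injective.of_comp (f := y.toFun) (g := x.toFun) h.injective)

theorem bijective_right_of_mul [Finite α] {x y : Transf α}
    (h : Function.Bijective (x * y).toFun) : Function.Bijective y.toFun :=
  Finite.surjective_iff_bijective.mp
    (Function.Surjective.of_comp (f := y.toFun) (g := x.toFun) h.surjective)

end Transf

open Transf

section

variable {α : Type*} {G : Subgroup (Equiv.Perm α)} {a : Transf α}

theorem ofPerm_mem_genGA {g : Equiv.Perm α} (hg : g ∈ G) : ofPerm g ∈ genGA G a :=
  Subsemigroup.subset_closure (Or.inr ⟨g, hg, rfl⟩)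

theorem self_mem_genGA : a ∈ genGA G a := Subsemigroup.subset_closure (Or.inl rfl)

theorem self_mem_genConj : a ∈ genConj G a :=
  Subsemigroup.subset_closure ⟨1, G.one_mem, rfl⟩

/-- `⟨a^g | g ∈ G⟩` is closed under conjugation by `G`. -/
theorem conj_mem_genConj_s3 {s : Transf α} (hs : s ∈ genConj G a) {h : Equiv.Perm α} (hh : h ∈ G) :
    ofPerm h * s * ofPerm h⁻¹ ∈ genConj G a := by
  induction hs using Subsemigroup.closure_induction with
  | mem x hx =>
    obtain ⟨g, hg, rfl⟩ := hx
    refine Subsemigroup.subset_closure ⟨h⁻¹ * g, G.mul_mem (G.inv_mem hh) hg, ?_⟩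
    simp only [mul_inv_rev, inv_inv]
    rfl
  | mul x y _ _ ihx ihy =>
    have key : ofPerm h * (x * y) * ofPerm h⁻¹ =
        (ofPerm h * x * ofPerm h⁻¹) * (ofPerm h * y * ofPerm h⁻¹) := by
      have h1 : ∀ z : Transf α, ofPerm h⁻¹ * (ofPerm h * z) = z := by
        intro z
        rw [← mul_assoc, ofPerm_mul, mul_inv_cancel]
        rfl
      simp only [mul_assoc, h1]
    rw [key]
    exact (genConj G a).mul_mem ihx ihy

theorem genConj_le_genGA {u : Transf α} (hu : u ∈ genGA G a) : genConj G u ≤ genGA G a := by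
  refine Subsemigroup.closure_le.mpr ?_
  rintro _ ⟨g, hg, rfl⟩
  exact (genGA G a).mul_mem
    ((genGA G a).mul_mem (ofPerm_mem_genGA (G.inv_mem hg)) hu) (ofPerm_mem_genGA hg)

/-- Moving a permutation `h` to the right past a transformation `s` conjugates `s`. The product
`k * h` of permutations, being composed right-to-left, corresponds to `h` followed by `k`. -/
theorem ofPerm_mul_mul_ofPerm (h k : Equiv.Perm α) (s : Transf α) :
    ofPerm h * (s * ofPerm k) = (ofPerm h * s * ofPerm h⁻¹) * ofPerm (k * h) := by
  rw [mul_assoc _ (ofPerm h⁻¹), ofPerm_mul, mul_assoc k, mul_inv_cancel, mul_one, mul_assoc]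

/-- An element of `⟨G, a⟩` lies in `G` or in `⟨a^g | g ∈ G⟩ G`. -/
theorem mem_genGA_cases {u : Transf α} (hu : u ∈ genGA G a) :
    u ∈ ofPerm '' (G : Set (Equiv.Perm α)) ∨
      ∃ s ∈ genConj G a, ∃ h ∈ G, u = s * ofPerm h := by
  induction hu using Subsemigroup.closure_induction with
  | mem x hx =>
    rcases hx with rfl | hx
    · exact Or.inr ⟨x, self_mem_genConj, 1, G.one_mem, rfl⟩
    · exact Or.inl hx
  | mul x y _ _ ihx ihy =>
    rcases ihx with ⟨g, hg, rfl⟩ | ⟨s, hs, g, hg, rfl⟩ <;>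
      rcases ihy with ⟨k, hk, rfl⟩ | ⟨t, ht, k, hk, rfl⟩
    · exact Or.inl ⟨k * g, G.mul_mem hk hg, rfl⟩
    · refine Or.inr ⟨_, conj_mem_genConj_s3 ht hg, k * g, G.mul_mem hk hg, ?_⟩
      rw [ofPerm_mul_mul_ofPerm]
    · exact Or.inr ⟨s, hs, k * g, G.mul_mem hk hg, rfl⟩
    · refine Or.inr ⟨_, (genConj G a).mul_mem hs (conj_mem_genConj_s3 ht hg),
        k * g, G.mul_mem hk hg, ?_⟩
      rw [mul_assoc s, ofPerm_mul_mul_ofPerm, mul_assoc s]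

/-- An idempotent in `⟨a^g | g ∈ G⟩ G` lies in `⟨a^g | g ∈ G⟩`. -/
theorem idem_mem_genConj [Finite α] {e s : Transf α} {h : Equiv.Perm α}
    (hs : s ∈ genConj G a) (hh : h ∈ G) (he : e = s * ofPerm h) (hee : e * e = e) :
    e ∈ genConj G a := by
  have key : ∀ m : ℕ, ∃ t ∈ genConj G a, e = t * ofPerm (h ^ (m + 1)) := by
    intro m
    induction m with
    | zero => exact ⟨s, hs, by simpa using he⟩
    | succ m ih =>
      obtain ⟨t, ht, het⟩ := ih
      refine ⟨_, (genConj G a).mul_mem ht (conj_mem_genConj_s3 hs (G.pow_mem hh (m + 1))), ?_⟩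
      have h1 : e = (t * ofPerm (h ^ (m + 1))) * (s * ofPerm h) := by
        rw [← het, ← he, hee]
      rw [h1, mul_assoc t, ofPerm_mul_mul_ofPerm, mul_assoc t, ← pow_succ' h]
  obtain ⟨t, ht, het⟩ := key (orderOf h - 1)
  rw [Nat.sub_add_cancel (orderOf_pos h), pow_orderOf_eq_one, mul_ofPerm_one] at het
  rwa [het]

theorem not_bijective_of_mem_genConj [Finite α] (ha : ¬ Function.Bijective a.toFun)
    {s : Transf α} (hs : s ∈ genConj G a) : ¬ Function.Bijective s.toFun := by
  induction hs using Subsemigroup.closure_induction with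
  | mem x hx =>
    obtain ⟨g, hg, rfl⟩ := hx
    exact fun hb => ha (bijective_right_of_mul (bijective_left_of_mul hb))
  | mul x y _ _ ihx _ => exact fun hb => ihx (bijective_left_of_mul hb)

/-- For singular `a`, removing `G` from `⟨G, a⟩` leaves exactly its singular elements. -/
theorem mem_genGAminusG_iff [Finite α] (ha : ¬ Function.Bijective a.toFun) {u : Transf α} :
    u ∈ genGAminusG G a ↔ u ∈ genGA G a ∧ ¬ Function.Bijective u.toFun := by
  constructor
  · rintro ⟨hu, hG⟩
    refine ⟨hu, fun hb => ?_⟩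
    rcases mem_genGA_cases hu with h | ⟨s, hs, h, _, rfl⟩
    · exact hG h
    · exact not_bijective_of_mem_genConj ha hs (bijective_left_of_mul hb)
  · rintro ⟨hu, hb⟩
    refine ⟨hu, ?_⟩
    rintro ⟨g, _, rfl⟩
    exact hb (bijective_ofPerm g)

end

theorem stmt3 (n : ℕ) (hn : 1 ≤ n) (G : Subgroup (Equiv.Perm (Fin n))) :
    (∀ a : Transf (Fin n), ¬ Function.Bijective a.toFun →
      IsIdemGen (genGAminusG G a)) ↔
    (∀ a : Transf (Fin n), ¬ Function.Bijective a.toFun →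
      IsIdemGen (genConj G a : Set (Transf (Fin n)))) := by
  constructor
  · intro H a ha
    apply Set.Subset.antisymm
    · intro u hu
      have hmem : u ∈ genGAminusG G a := (mem_genGAminusG_iff ha).mpr
        ⟨genConj_le_genGA self_mem_genGA hu, not_bijective_of_mem_genConj ha hu⟩
      rw [H a ha] at hmem
      refine Subsemigroup.closure_mono ?_ hmem
      rintro e ⟨⟨he, heG⟩, hee⟩
      rcases mem_genGA_cases he with h | ⟨s, hs, h, hh, hes⟩
      · exact absurd h heG
      · exact ⟨idem_mem_genConj hs hh hes hee, hee⟩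
    · exact Subsemigroup.closure_le.mpr fun e he => he.1
  · intro H a ha
    apply Set.Subset.antisymm
    · intro u hu
      obtain ⟨huGA, hub⟩ := (mem_genGAminusG_iff ha).mp hu
      have hmem : u ∈ (genConj G u : Set (Transf (Fin n))) := self_mem_genConj
      rw [H u hub] at hmem
      refine Subsemigroup.closure_mono ?_ hmem
      rintro e ⟨he, hee⟩
      exact ⟨(mem_genGAminusG_iff ha).mpr
        ⟨genConj_le_genGA huGA he, not_bijective_of_mem_genConj hub he⟩, hee⟩
    · intro u hu
      induction hu using Subsemigroup.closure_induction with
      | mem x hx => exact hx.1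
      | mul x y _ _ ihx ihy =>
        rw [mem_genGAminusG_iff ha] at ihx ihy ⊢
        exact ⟨(genGA G a).mul_mem ihx.1 ihy.1, fun hb => ihx.2 (bijective_left_of_mul hb)⟩
end
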